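/- Let p₀, p₁, p₂, p₃ be affinely independent points in ℝ³ with barycentric coordinate functions x₀, …, x₃ and constant gradients g_i = ∇x_i. For k = 0, 1, 2, 3 let f_k be the face of the tetrahedron obtained by omitting the vertex p_k (with its vertices in increasing order), and let W_{f_k} be its Whitney face field. Then for any real coefficients c₀, c₁, c₂, c₃, the vector field ∑_{k=0}^{3} c_k W_{f_k} has constant divergence equal to (6 / det M) · ∑_{k=0}^{3} (−1)^k c_k, where M is the 3×3 matrix with columns p₁ − p₀, p₂ − p₀, p₃ − p₀. In particular, ∑_k c_k W_{f_k} is divergence-free if and only if c₀ − c₁ + c₂ − c₃ = 0. -/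

import Mathlib

/-- The constant gradient of an affine function `x : ℝ³ → ℝ`, as a vector. -/
noncomputable def bgrad (x : (Fin 3 → ℝ) →ᵃ[ℝ] ℝ) : Fin 3 → ℝ :=
  fun k => x.linear (Pi.single k 1)

/-- The Whitney face field of the face `[p_a, p_b, p_c]`, for barycentric coordinate
functions `x` of a tetrahedron:
`W = 2 (x_a ∇x_b × ∇x_c + x_b ∇x_c × ∇x_a + x_c ∇x_a × ∇x_b)`. -/
noncomputable def Wface (x : Fin 4 → ((Fin 3 → ℝ) →ᵃ[ℝ] ℝ)) (a b c : Fin 4)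
    (y : Fin 3 → ℝ) : Fin 3 → ℝ :=
  (2 : ℝ) • (x a y • crossProduct (bgrad (x b)) (bgrad (x c))
    + x b y • crossProduct (bgrad (x c)) (bgrad (x a))
    + x c y • crossProduct (bgrad (x a)) (bgrad (x b)))

/-!
Each `W_f` is a sum of terms `x_a • v` with `v` constant, and such a term has divergence `g_a ⬝ v`;
so the divergence of `W_[a, b, c]` is `2` times three cyclic rotations of the triple product
`g_a ⬝ (g_b × g_c)`, that is, `6 det (g_a, g_b, g_c)`. As `∑ x_i = 1`, the four gradients sum to
zero, hence the minors of the `4 × 3` matrix of gradients agree up to the sign `(-1)^k`. Finally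
the rows `g₁, g₂, g₃` form the inverse of the matrix of edges `p_j - p₀`, because
`x_i (p_j) - x_i (p₀) = δ_ij` for `i, j ≥ 1`.
-/

open Matrix

section Divergence

variable {𝕜 ι κ : Type*} [NontriviallyNormedField 𝕜] [Fintype ι] [DecidableEq ι]
  {V : (ι → 𝕜) → ι → 𝕜} {y : ι → 𝕜}

/-- The divergence `∑ i, ∂ᵢ Vᵢ` of a vector field on `𝕜^ι`, built from the partial derivatives of
the components. A component that is not differentiable at `y` contributes zero. -/
noncomputable def divergence (V : (ι → 𝕜) → ι → 𝕜) (y : ι → 𝕜) : 𝕜 :=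
  ∑ i, fderiv 𝕜 (fun z => V z i) y (Pi.single i 1)

theorem divergence_eq_trace {V' : (ι → 𝕜) →L[𝕜] ι → 𝕜} (hV : HasFDerivAt V V' y) :
    divergence V y = LinearMap.trace 𝕜 (ι → 𝕜) V' := by
  rw [LinearMap.trace_eq_matrix_trace 𝕜 (Pi.basisFun 𝕜 ι), Matrix.trace]
  refine Finset.sum_congr rfl fun i _ => ?_
  simp [(hasFDerivAt_pi'.1 hV i).fderiv]

theorem divergence_sum_const_smul {s : Finset κ} {W : κ → (ι → 𝕜) → ι → 𝕜}
    (hW : ∀ k ∈ s, DifferentiableAt 𝕜 (W k) y) (c : κ → 𝕜) :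
    divergence (fun z => ∑ k ∈ s, c k • W k z) y = ∑ k ∈ s, c k * divergence (W k) y := by
  rw [divergence_eq_trace
    (HasFDerivAt.fun_sum fun k hk => (hW k hk).hasFDerivAt.fun_const_smul (c k)),
    ContinuousLinearMap.toLinearMap_sum, map_sum]
  refine Finset.sum_congr rfl fun k hk => ?_
  rw [ContinuousLinearMap.toLinearMap_smul, map_smul, smul_eq_mul,
    divergence_eq_trace (hW k hk).hasFDerivAt]

end Divergence

theorem hasFDerivAt_affineMap {𝕜 E F : Type*} [NontriviallyNormedField 𝕜] [CompleteSpace 𝕜]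
    [NormedAddCommGroup E] [NormedSpace 𝕜 E] [FiniteDimensional 𝕜 E]
    [NormedAddCommGroup F] [NormedSpace 𝕜 F] (f : E →ᵃ[𝕜] F) (y : E) :
    HasFDerivAt f (LinearMap.toContinuousLinearMap f.linear) y :=
  ContinuousAffineMap.hasFDerivAt ⟨f, f.continuous_of_finiteDimensional⟩

section WhitneyFaceField

variable (x : Fin 4 → ((Fin 3 → ℝ) →ᵃ[ℝ] ℝ))

theorem linear_eq_bgrad_dotProduct (f : (Fin 3 → ℝ) →ᵃ[ℝ] ℝ) (v : Fin 3 → ℝ) :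
    f.linear v = bgrad f ⬝ᵥ v := by
  conv_lhs => rw [pi_eq_sum_univ' v]
  simp [bgrad, dotProduct, mul_comm]

theorem hasFDerivAt_Wface (a b c : Fin 4) (y : Fin 3 → ℝ) :
    HasFDerivAt (Wface x a b c)
      ((2 : ℝ) •
        ((LinearMap.toContinuousLinearMap (x a).linear).smulRight (bgrad (x b) ⨯₃ bgrad (x c))
          + (LinearMap.toContinuousLinearMap (x b).linear).smulRight (bgrad (x c) ⨯₃ bgrad (x a))
          + (LinearMap.toContinuousLinearMap (x c).linear).smulRight
              (bgrad (x a) ⨯₃ bgrad (x b)))) y :=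
  ((((hasFDerivAt_affineMap (x a) y).smul_const _).fun_add
    ((hasFDerivAt_affineMap (x b) y).smul_const _)).fun_add
    ((hasFDerivAt_affineMap (x c) y).smul_const _)).fun_const_smul 2

theorem divergence_Wface (a b c : Fin 4) (y : Fin 3 → ℝ) :
    divergence (Wface x a b c) y = 6 * det ![bgrad (x a), bgrad (x b), bgrad (x c)] := by
  have divergence_eq_triple_products : divergence (Wface x a b c) y =
      2 * (bgrad (x a) ⬝ᵥ bgrad (x b) ⨯₃ bgrad (x c) + bgrad (x b) ⬝ᵥ bgrad (x c) ⨯₃ bgrad (x a)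
        + bgrad (x c) ⬝ᵥ bgrad (x a) ⨯₃ bgrad (x b)) := by
    simp [divergence_eq_trace (hasFDerivAt_Wface x a b c y), linear_eq_bgrad_dotProduct,
      mul_add]
  rw [divergence_eq_triple_products, triple_product_permutation (bgrad (x c)),
    ← triple_product_permutation (bgrad (x a)), triple_product_eq_det]
  ring

/-- The Whitney face field of the face opposite to the vertex `k`, whose vertices are listed in
increasing order. -/
noncomputable def oppositeFaceField (k : Fin 4) : (Fin 3 → ℝ) → Fin 3 → ℝ :=
  Wface x (k.succAbove 0) (k.succAbove 1) (k.succAbove 2)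

/-- The matrix whose `i`-th row is the gradient of `x i`; its maximal minors are the divergences
of the face fields, up to the factor `6`. -/
noncomputable def gradientMatrix : Matrix (Fin 4) (Fin 3) ℝ :=
  Matrix.of fun i => bgrad (x i)

theorem differentiable_oppositeFaceField (k : Fin 4) :
    Differentiable ℝ (oppositeFaceField x k) :=
  fun y => (hasFDerivAt_Wface x _ _ _ y).differentiableAt

theorem divergence_oppositeFaceField (k : Fin 4) (y : Fin 3 → ℝ) :
    divergence (oppositeFaceField x k) y =
      6 * ((gradientMatrix x).submatrix k.succAbove id).det := by
  rw [oppositeFaceField, divergence_Wface]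
  congr 2
  ext i j
  fin_cases i <;> rfl

end WhitneyFaceField

section Barycentric

theorem eq_affineBasis_coord {ι k V P : Type*} [DecidableEq ι] [Ring k] [AddCommGroup V]
    [Module k V] [AddTorsor V P] (b : AffineBasis ι k P) {i : ι} {f : P →ᵃ[k] k}
    (hf : ∀ j, f (b j) = if i = j then 1 else 0) : f = b.coord i := by
  have eqOn_vertices : (Set.range b).EqOn f (b.coord i) := by
    rintro _ ⟨j, rfl⟩
    rw [hf, b.coord_apply]
  ext q
  exact AffineMap.eqOn_affineSpan eqOn_vertices (b.tot ▸ AffineSubspace.mem_top k V q)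

theorem sum_linear_affineBasis_coord {ι k V P : Type*} [Fintype ι] [Ring k] [AddCommGroup V]
    [Module k V] [AddTorsor V P] (b : AffineBasis ι k P) (v : V) :
    ∑ i, (b.coord i).linear v = 0 := by
  obtain ⟨i⟩ := b.nonempty
  calc ∑ j, (b.coord j).linear v
      = ∑ j, b.coord j (v +ᵥ b i) - ∑ j, b.coord j (b i) := by
        simp [AffineMap.map_vadd, Finset.sum_add_distrib]
    _ = 0 := by simp only [b.sum_coord_apply_eq_one, sub_self]

/-- The matrix whose columns are the edges `p j - p 0`, for `j ≠ 0`, of the simplex with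
vertices `p`; its determinant is `n!` times the signed volume. -/
def edgeMatrix {R : Type*} [Sub R] {n : ℕ} (p : Fin (n + 1) → Fin n → R) :
    Matrix (Fin n) (Fin n) R :=
  Matrix.of fun i j => p j.succ i - p 0 i

variable (b : AffineBasis (Fin 4) ℝ (Fin 3 → ℝ))

theorem sum_bgrad_coord : ∑ i, bgrad (b.coord i) = 0 := by
  ext j
  rw [Finset.sum_apply]
  exact sum_linear_affineBasis_coord b (Pi.single j 1)

theorem gradientMatrix_coord_mul_edgeMatrix :
    (gradientMatrix b.coord).submatrix Fin.succ id * edgeMatrix b = 1 := by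
  ext i j
  calc bgrad (b.coord i.succ) ⬝ᵥ (b j.succ - b 0)
      = b.coord i.succ (b j.succ) - b.coord i.succ (b 0) := by
        rw [← linear_eq_bgrad_dotProduct]
        exact (b.coord i.succ).linearMap_vsub _ _
    _ = (1 : Matrix (Fin 3) (Fin 3) ℝ) i j := by
        simp [b.coord_apply, Matrix.one_apply]

theorem det_gradientMatrix_coord_mul_det_edgeMatrix :
    ((gradientMatrix b.coord).submatrix Fin.succ id).det * (edgeMatrix b).det = 1 := by
  rw [← det_mul, gradientMatrix_coord_mul_edgeMatrix, det_one]

theorem det_edgeMatrix_ne_zero : (edgeMatrix b).det ≠ 0 :=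
  right_ne_zero_of_mul_eq_one (det_gradientMatrix_coord_mul_det_edgeMatrix b)

theorem det_gradientMatrix_coord_succAbove (k : Fin 4) :
    ((gradientMatrix b.coord).submatrix k.succAbove id).det =
      (-1) ^ (k : ℕ) / (edgeMatrix b).det := by
  have det_succ : ((gradientMatrix b.coord).submatrix (Fin.succAbove 0) id).det =
      1 / (edgeMatrix b).det := by
    rw [Fin.succAbove_zero]
    exact eq_one_div_of_mul_eq_one_left (det_gradientMatrix_coord_mul_det_edgeMatrix b)
  rw [submatrix_succAbove_det_eq_negOnePow_submatrix_succAbove_det (gradientMatrix b.coord)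
    (sum_bgrad_coord b) k 0, det_succ]
  simp [Units.smul_def, Int.negOnePow_def, div_eq_mul_inv]

theorem divergence_sum_smul_oppositeFaceField (c : Fin 4 → ℝ) (y : Fin 3 → ℝ) :
    divergence (fun z => ∑ k, c k • oppositeFaceField b.coord k z) y =
      6 / (edgeMatrix b).det * ∑ k : Fin 4, (-1) ^ (k : ℕ) * c k := by
  rw [divergence_sum_const_smul fun k _ => differentiable_oppositeFaceField b.coord k y,
    Finset.mul_sum]
  refine Finset.sum_congr rfl fun k _ => ?_
  rw [divergence_oppositeFaceField, det_gradientMatrix_coord_succAbove]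
  ring

end Barycentric

/-- For a tetrahedron with affinely independent vertices `p₀, …, p₃`, a linear combination
`∑ c_k W_{f_k}` of the Whitney face fields of its four faces (`f_k` omitting vertex `p_k`,
vertices in increasing order) has constant divergence `(6 / det M) (c₀ − c₁ + c₂ − c₃)`,
where `M` has columns `p₁ − p₀, p₂ − p₀, p₃ − p₀`; in particular it is divergence-free
iff `c₀ − c₁ + c₂ − c₃ = 0`. -/
theorem whitney_face_fields_div_combination
    (p : Fin 4 → (Fin 3 → ℝ)) (hp : AffineIndependent ℝ p)
    (x : Fin 4 → ((Fin 3 → ℝ) →ᵃ[ℝ] ℝ))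
    (hx : ∀ i j, x i (p j) = if i = j then 1 else 0)
    (c : Fin 4 → ℝ)
    (V : (Fin 3 → ℝ) → (Fin 3 → ℝ))
    (hV : ∀ y, V y = c 0 • Wface x 1 2 3 y + c 1 • Wface x 0 2 3 y
      + c 2 • Wface x 0 1 3 y + c 3 • Wface x 0 1 2 y) :
    (∀ y : Fin 3 → ℝ,
        ∑ i : Fin 3, fderiv ℝ (fun z => V z i) y (Pi.single i 1)
          = (6 / (Matrix.of fun (i j : Fin 3) => p j.succ i - p 0 i).det)
            * (c 0 - c 1 + c 2 - c 3)) ∧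
    ((∀ y : Fin 3 → ℝ,
        ∑ i : Fin 3, fderiv ℝ (fun z => V z i) y (Pi.single i 1) = 0)
      ↔ c 0 - c 1 + c 2 - c 3 = 0) := by
  obtain ⟨b, rfl⟩ : ∃ b : AffineBasis (Fin 4) ℝ (Fin 3 → ℝ), ⇑b = p :=
    ⟨⟨p, hp, hp.affineSpan_eq_top_iff_card_eq_finrank_add_one.2 (by simp)⟩, rfl⟩
  obtain rfl : x = b.coord := funext fun i => eq_affineBasis_coord b (hx i)
  have V_eq : V = fun z => ∑ k, c k • oppositeFaceField b.coord k z := by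
    ext1 z
    rw [hV, Fin.sum_univ_four]
    rfl
  have alternating_sum : ∑ k : Fin 4, (-1) ^ (k : ℕ) * c k = c 0 - c 1 + c 2 - c 3 := by
    simp [Fin.sum_univ_four, pow_succ, sub_eq_add_neg]
  have divergence_V (y : Fin 3 → ℝ) :
      divergence V y = 6 / (edgeMatrix b).det * (c 0 - c 1 + c 2 - c 3) := by
    rw [V_eq, divergence_sum_smul_oppositeFaceField, alternating_sum]
  have factor_ne_zero : 6 / (edgeMatrix b).det ≠ 0 :=
    div_ne_zero (by norm_num) (det_edgeMatrix_ne_zero b)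
  refine ⟨divergence_V, ?_⟩
  change (∀ y, divergence V y = 0) ↔ _
  simp [divergence_V, factor_ne_zero]
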